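/- The average uplink spectral efficiency in the interference-limited case with η = 4 and infinite P_u, R = ∫₀^∞ exp(−√x · arctan(√x))/(x+1) dx, is a finite constant independent of λ and ρ₀, and satisfies 0.7 < R < 0.85 (numerically R ≈ 0.77 nat/s/Hz). -/

import Mathlib

open Real MeasureTheory Set

/-- A function on `[0, b]` vanishing at `0` with nonnegative derivative is nonnegative. -/
lemma nonneg_of_hasDerivAt_nonneg {F F' : ℝ → ℝ} {b : ℝ} (h0 : F 0 = 0)
    (hF : ∀ x ∈ Icc 0 b, HasDerivAt F (F' x) x) (hF' : ∀ x ∈ Icc 0 b, 0 ≤ F' x)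
    (hb : 0 ≤ b) : 0 ≤ F b := by
  have hmono : MonotoneOn F (Icc 0 b) := by
    refine monotoneOn_of_deriv_nonneg (convex_Icc 0 b)
      (fun x hx => (hF x hx).continuousAt.continuousWithinAt)
      (fun x hx => (hF x (interior_subset hx)).differentiableAt.differentiableWithinAt) ?_
    intro x hx
    rw [(hF x (interior_subset hx)).deriv]
    exact hF' x (interior_subset hx)
  simpa [h0] using hmono (left_mem_Icc.2 hb) (right_mem_Icc.2 hb) hb

lemma hasDerivAt_mul_arctan (t : ℝ) :
    HasDerivAt (fun t => t * arctan t) (arctan t + t / (1 + t ^ 2)) t :=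
  ((hasDerivAt_id t).mul (hasDerivAt_arctan t)).congr_deriv (by simp [div_eq_mul_inv])

lemma hasDerivAt_log_one_add_mul_sq {a : ℝ} (ha : 0 ≤ a) (t : ℝ) :
    HasDerivAt (fun t => log (1 + a * t ^ 2)) (2 * a * t / (1 + a * t ^ 2)) t := by
  have h : HasDerivAt (fun t : ℝ => 1 + a * t ^ 2) (a * (2 * t)) t := by
    simpa using ((hasDerivAt_pow 2 t).const_mul a).const_add 1
  convert h.log (by positivity) using 1
  ring

lemma le_arctan {t : ℝ} (ht : 0 ≤ t) : 3 * t / (3 + t ^ 2) ≤ arctan t := by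
  rw [← sub_nonneg]
  refine nonneg_of_hasDerivAt_nonneg (F := fun t => arctan t - 3 * t / (3 + t ^ 2))
    (F' := fun t => 1 / (1 + t ^ 2) -
      (3 * (3 + t ^ 2) - 3 * t * (2 * t)) / (3 + t ^ 2) ^ 2) (by simp) ?_ ?_ ht
  · intro x _
    have h1 : HasDerivAt (fun t : ℝ => 3 * t) 3 x := by
      simpa using (hasDerivAt_id x).const_mul 3
    have h2 : HasDerivAt (fun t : ℝ => 3 + t ^ 2) (2 * x) x := by
      simpa using (hasDerivAt_pow 2 x).const_add 3
    exact (hasDerivAt_arctan x).sub (h1.div h2 (by positivity))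
  · intro x _
    have : 1 / (1 + x ^ 2) - (3 * (3 + x ^ 2) - 3 * x * (2 * x)) / (3 + x ^ 2) ^ 2
        = 4 * x ^ 4 / ((1 + x ^ 2) * (3 + x ^ 2) ^ 2) := by
      field_simp
      ring
    rw [this]
    positivity

lemma arctan_le {t : ℝ} (ht : 0 ≤ t) :
    arctan t ≤ (15 * t + 4 * t ^ 3) / (15 + 9 * t ^ 2) := by
  rw [← sub_nonneg]
  refine nonneg_of_hasDerivAt_nonneg
    (F := fun t => (15 * t + 4 * t ^ 3) / (15 + 9 * t ^ 2) - arctan t)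
    (F' := fun t => ((15 + 12 * t ^ 2) * (15 + 9 * t ^ 2) -
      (15 * t + 4 * t ^ 3) * (18 * t)) / (15 + 9 * t ^ 2) ^ 2 - 1 / (1 + t ^ 2))
    (by simp) ?_ ?_ ht
  · intro x _
    have h1 : HasDerivAt (fun t : ℝ => 15 * t + 4 * t ^ 3) (15 + 12 * x ^ 2) x :=
      (((hasDerivAt_id x).const_mul 15).add ((hasDerivAt_pow 3 x).const_mul 4)).congr_deriv
        (by norm_num; ring)
    have h2 : HasDerivAt (fun t : ℝ => 15 + 9 * t ^ 2) (18 * x) x :=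
      (((hasDerivAt_pow 2 x).const_mul 9).const_add 15).congr_deriv (by norm_num; ring)
    exact (h1.div h2 (by positivity)).sub (hasDerivAt_arctan x)
  · intro x _
    have : ((15 + 12 * x ^ 2) * (15 + 9 * x ^ 2) - (15 * x + 4 * x ^ 3) * (18 * x))
        / (15 + 9 * x ^ 2) ^ 2 - 1 / (1 + x ^ 2)
        = 36 * x ^ 6 / ((1 + x ^ 2) * (15 + 9 * x ^ 2) ^ 2) := by
      field_simp
      ring
    rw [this]
    positivity

lemma log_add_log_le_mul_arctan {t : ℝ} (ht : 0 ≤ t) :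
    log (1 + 1 / 5 * t ^ 2) + log (1 + 4 / 5 * t ^ 2) ≤ t * arctan t := by
  rw [← sub_nonneg]
  refine nonneg_of_hasDerivAt_nonneg
    (F := fun t => t * arctan t - (log (1 + 1 / 5 * t ^ 2) + log (1 + 4 / 5 * t ^ 2)))
    (F' := fun t => arctan t + t / (1 + t ^ 2) -
      (2 * (1 / 5) * t / (1 + 1 / 5 * t ^ 2) + 2 * (4 / 5) * t / (1 + 4 / 5 * t ^ 2)))
    (by simp) ?_ ?_ ht
  · intro x _
    exact (hasDerivAt_mul_arctan x).sub ((hasDerivAt_log_one_add_mul_sq (by norm_num) x).add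
      (hasDerivAt_log_one_add_mul_sq (by norm_num) x))
  · intro x hx
    have h0 := hx.1
    have h1 := le_arctan h0
    have h2 : 0 ≤ 3 * x / (3 + x ^ 2) + x / (1 + x ^ 2) -
      (2 * (1 / 5) * x / (1 + 1 / 5 * x ^ 2) + 2 * (4 / 5) * x / (1 + 4 / 5 * x ^ 2)) := by
      have : 3 * x / (3 + x ^ 2) + x / (1 + x ^ 2) -
          (2 * (1 / 5) * x / (1 + 1 / 5 * x ^ 2) + 2 * (4 / 5) * x / (1 + 4 / 5 * x ^ 2))
          = (2 * x ^ 3 + 10 * x ^ 5) /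
            ((3 + x ^ 2) * (1 + x ^ 2) * (5 + x ^ 2) * (5 + 4 * x ^ 2)) := by
        field_simp
        ring
      rw [this]
      positivity
    linarith

lemma log_five_div_four_bounds :
    log (5 / 4) ≤ (log 2 - 3 / 128) / 3 ∧ (log 2 - 3 / 125) / 3 ≤ log (5 / 4) := by
  have h : 3 * log (5 / 4) = log 2 + log (125 / 128) := by
    rw [← log_mul (by norm_num) (by norm_num), ← log_rpow (by norm_num)]
    norm_num
  have h1 := log_le_sub_one_of_pos (show (0 : ℝ) < 125 / 128 by norm_num)
  have h2 := one_sub_inv_le_log_of_pos (show (0 : ℝ) < 125 / 128 by norm_num)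
  constructor <;> linarith

lemma sqrt_three_mul_arctan_le :
    √3 * arctan √3 ≤ 2 * log (1 + 1 / 2 * √3 ^ 2) := by
  rw [arctan_sqrt_three, sq_sqrt (by norm_num)]
  have h1 : √3 < 1.7321 := by
    rw [sqrt_lt' (by norm_num)]
    norm_num
  have h2 : log (1 + 1 / 2 * 3) = log 2 + log (5 / 4) := by
    rw [← log_mul (by norm_num) (by norm_num)]
    norm_num
  have h3 : √3 * π ≤ 1.7321 * 3.1416 :=
    mul_le_mul h1.le pi_lt_d4.le pi_pos.le (by norm_num)
  have h4 := log_five_div_four_bounds.2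
  have h5 := log_two_gt_d9
  rw [h2]
  linarith

lemma mul_arctan_le_of_le_one {t : ℝ} (h0 : 0 ≤ t) (h1 : t ≤ 1) :
    t * arctan t ≤ 2 * log (1 + 1 / 2 * t ^ 2) := by
  rw [← sub_nonneg]
  refine nonneg_of_hasDerivAt_nonneg
    (F := fun t => 2 * log (1 + 1 / 2 * t ^ 2) - t * arctan t)
    (F' := fun t => 2 * (2 * (1 / 2) * t / (1 + 1 / 2 * t ^ 2)) - (arctan t + t / (1 + t ^ 2)))
    (by simp) ?_ ?_ h0
  · intro x _
    exact ((hasDerivAt_log_one_add_mul_sq (by norm_num) x).const_mul 2).sub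
      (hasDerivAt_mul_arctan x)
  · intro x hx
    have hx0 := hx.1
    have hx1 : x ^ 2 ≤ 1 := pow_le_one₀ hx0 (hx.2.trans h1)
    have h2 := arctan_le hx0
    have h3 : 2 * (2 * (1 / 2) * x / (1 + 1 / 2 * x ^ 2)) - x / (1 + x ^ 2) -
        (15 * x + 4 * x ^ 3) / (15 + 9 * x ^ 2)
        = x ^ 3 * (6 + 4 * (1 - x ^ 2) * (1 + x ^ 2)) /
          ((2 + x ^ 2) * (1 + x ^ 2) * (15 + 9 * x ^ 2)) := by
      field_simp
      ring
    have h4 : 0 ≤ x ^ 3 * (6 + 4 * (1 - x ^ 2) * (1 + x ^ 2)) /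
          ((2 + x ^ 2) * (1 + x ^ 2) * (15 + 9 * x ^ 2)) := by
      have := sub_nonneg.2 hx1
      positivity
    linarith

lemma concaveOn_two_mul_log_sub_mul_arctan :
    ConcaveOn ℝ (Icc 1 √3) (fun t => 2 * log (1 + 1 / 2 * t ^ 2) - t * arctan t) := by
  have hd (x : ℝ) : HasDerivAt (fun t => 2 * log (1 + 1 / 2 * t ^ 2) - t * arctan t)
      (2 * (2 * (1 / 2) * x / (1 + 1 / 2 * x ^ 2)) - (arctan x + x / (1 + x ^ 2))) x :=
    ((hasDerivAt_log_one_add_mul_sq (by norm_num) x).const_mul 2).sub (hasDerivAt_mul_arctan x)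
  have hd2 (x : ℝ) : HasDerivAt
      (fun x => 2 * (2 * (1 / 2) * x / (1 + 1 / 2 * x ^ 2)) - (arctan x + x / (1 + x ^ 2)))
      (2 * ((1 * (1 + 1 / 2 * x ^ 2) - x * x) / (1 + 1 / 2 * x ^ 2) ^ 2) -
        (1 / (1 + x ^ 2) + (1 * (1 + x ^ 2) - x * (2 * x)) / (1 + x ^ 2) ^ 2)) x := by
    have h1 : HasDerivAt (fun t : ℝ => 1 + 1 / 2 * t ^ 2) x x :=
      (((hasDerivAt_pow 2 x).const_mul (1 / 2)).const_add 1).congr_deriv (by norm_num; ring)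
    have h2 : HasDerivAt (fun t : ℝ => 1 + t ^ 2) (2 * x) x := by
      simpa using (hasDerivAt_pow 2 x).const_add 1
    have h3 : HasDerivAt (fun t : ℝ => 2 * (1 / 2) * t) 1 x :=
      ((hasDerivAt_id x).const_mul (2 * (1 / 2))).congr_deriv (by norm_num)
    exact ((h3.div h1 (by positivity)).const_mul 2 |>.congr_deriv (by ring)).sub
      ((hasDerivAt_arctan x).add ((hasDerivAt_id x).div h2 (by positivity)))
  refine concaveOn_of_hasDerivWithinAt2_nonpos (convex_Icc 1 √3)
    (fun x _ => (hd x).continuousAt.continuousWithinAt)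
    (fun x _ => (hd x).hasDerivWithinAt) (fun x _ => (hd2 x).hasDerivWithinAt) ?_
  intro x hx
  have hx1 : 1 ≤ x := (interior_subset hx).1
  have h : 2 * ((1 * (1 + 1 / 2 * x ^ 2) - x * x) / (1 + 1 / 2 * x ^ 2) ^ 2) -
      (1 / (1 + x ^ 2) + (1 * (1 + x ^ 2) - x * (2 * x)) / (1 + x ^ 2) ^ 2)
      = -(2 * x ^ 2 * ((x ^ 2 - 1) * (2 * x ^ 2 + 3) + 1) /
        ((2 + x ^ 2) ^ 2 * (1 + x ^ 2) ^ 2)) := by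
    field_simp
    ring
  rw [h, neg_nonpos]
  have : 0 ≤ x ^ 2 - 1 := sub_nonneg.2 (one_le_pow₀ hx1)
  positivity

lemma mul_arctan_le_of_le_sqrt_three {t : ℝ} (h0 : 0 ≤ t) (h3 : t ≤ √3) :
    t * arctan t ≤ 2 * log (1 + 1 / 2 * t ^ 2) := by
  rcases le_total t 1 with h1 | h1
  · exact mul_arctan_le_of_le_one h0 h1
  · have hle : (1 : ℝ) ≤ √3 := h1.trans h3
    have := concaveOn_two_mul_log_sub_mul_arctan.min_le_of_mem_Icc
      (left_mem_Icc.2 hle) (right_mem_Icc.2 hle) ⟨h1, h3⟩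
    refine sub_nonneg.1 (le_trans (le_min ?_ ?_) this)
    · exact sub_nonneg.2 (mul_arctan_le_of_le_one zero_le_one le_rfl)
    · exact sub_nonneg.2 sqrt_three_mul_arctan_le

lemma exp_neg_sqrt_mul_arctan_div_le {x : ℝ} (hx : 0 ≤ x) :
    exp (-(√x * arctan √x)) / (x + 1) ≤ 25 / ((1 + x) * (5 + x) * (5 + 4 * x)) := by
  have h := log_add_log_le_mul_arctan (sqrt_nonneg x)
  rw [sq_sqrt hx, ← log_mul (by positivity) (by positivity)] at h
  have h1 : exp (-(√x * arctan √x)) ≤ ((1 + 1 / 5 * x) * (1 + 4 / 5 * x))⁻¹ := by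
    rw [← exp_log (show 0 < (1 + 1 / 5 * x) * (1 + 4 / 5 * x) by positivity), ← exp_neg]
    exact exp_le_exp.2 (neg_le_neg h)
  calc _ ≤ ((1 + 1 / 5 * x) * (1 + 4 / 5 * x))⁻¹ / (x + 1) := by gcongr
    _ = _ := by field_simp; ring

lemma le_exp_neg_sqrt_mul_arctan_div {x : ℝ} (hx : 0 ≤ x) (hx3 : x ≤ 3) :
    4 / ((1 + x) * (2 + x) ^ 2) ≤ exp (-(√x * arctan √x)) / (x + 1) := by
  have h := mul_arctan_le_of_le_sqrt_three (sqrt_nonneg x) (sqrt_le_sqrt hx3)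
  rw [sq_sqrt hx] at h
  have h1 : ((1 + 1 / 2 * x) ^ 2)⁻¹ ≤ exp (-(√x * arctan √x)) := by
    rw [← exp_log (show 0 < (1 + 1 / 2 * x) ^ 2 by positivity), ← exp_neg, log_pow]
    exact exp_le_exp.2 (neg_le_neg (by exact_mod_cast h))
  calc _ = ((1 + 1 / 2 * x) ^ 2)⁻¹ / (x + 1) := by field_simp; ring
    _ ≤ _ := by gcongr

lemma two_mul_arctan_two_le : 2 * arctan 2 ≤ 2.22 := by
  have h := le_arctan (show (0 : ℝ) ≤ 2⁻¹ by norm_num)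
  rw [arctan_inv_of_pos (by norm_num)] at h
  have := pi_lt_d4
  norm_num at h
  linarith

lemma exp_le_of_le {y : ℝ} (hy : y ≤ 2.22) : exp y ≤ 9.5 := by
  have h1 : exp (0.22 : ℝ) ≤ 1 / (1 - 0.22) := by
    rw [le_div_iff₀ (by norm_num)]
    have h := one_sub_le_exp_neg (0.22 : ℝ)
    calc _ ≤ exp 0.22 * exp (-0.22) := by gcongr
      _ = 1 := by rw [← exp_add]; simp
  calc exp y ≤ exp (1 + 1 + 0.22) := exp_le_exp.2 (by linarith)
    _ = exp 1 * exp 1 * exp 0.22 := by rw [exp_add, exp_add]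
    _ ≤ 2.7182818286 * 2.7182818286 * (1 / (1 - 0.22)) := by
      have := exp_one_lt_d9.le
      gcongr
    _ ≤ 9.5 := by norm_num

lemma const_le_exp_neg_sqrt_mul_arctan_div {x : ℝ} (hx : 0 ≤ x) (hx4 : x ≤ 4) :
    2 / 95 ≤ exp (-(√x * arctan √x)) / (x + 1) := by
  have hs : √x ≤ 2 := (sqrt_le_left (by norm_num)).2 (by linarith)
  have ha : 0 ≤ arctan √x := arctan_nonneg.2 (sqrt_nonneg x)
  have h : √x * arctan √x ≤ 2 * arctan 2 :=
    mul_le_mul hs (arctan_strictMono.monotone hs) ha (by norm_num)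
  have h1 := exp_le_of_le (h.trans two_mul_arctan_two_le)
  rw [exp_neg, ← one_div, div_div, div_le_div_iff₀ (by norm_num) (by positivity)]
  have : exp (√x * arctan √x) * (x + 1) ≤ 9.5 * 5 := by
    gcongr
    linarith
  linarith

lemma continuousOn_exp_neg_sqrt_mul_arctan_div :
    ContinuousOn (fun x : ℝ => exp (-(√x * arctan √x)) / (x + 1)) (Ici 0) := by
  refine ContinuousOn.div (by fun_prop) (by fun_prop) fun x (hx : 0 ≤ x) => by positivity

/-- The antiderivative of the upper bound for the integrand. -/
lemma hasDerivAt_upper_antideriv {x : ℝ} (hx : 0 ≤ x) :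
    HasDerivAt (fun x => 25 / 4 * log ((1 + x) / (5 + 4 * x)) +
      5 / 12 * log ((5 + x) / (5 + 4 * x))) (25 / ((1 + x) * (5 + x) * (5 + 4 * x))) x := by
  have h1 : HasDerivAt (fun x : ℝ => 1 + x) 1 x := (hasDerivAt_id x).const_add 1
  have h2 : HasDerivAt (fun x : ℝ => 5 + x) 1 x := (hasDerivAt_id x).const_add 5
  have h3 : HasDerivAt (fun x : ℝ => 5 + 4 * x) 4 x := by
    simpa using ((hasDerivAt_id x).const_mul 4).const_add 5
  have h4 : 5 + 4 * x ≠ 0 := by positivity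
  have h5 : (1 + x) / (5 + 4 * x) ≠ 0 := by positivity
  have h6 : (5 + x) / (5 + 4 * x) ≠ 0 := by positivity
  refine (((h1.div h3 h4).log h5).const_mul (25 / 4)).add
    (((h2.div h3 h4).log h6).const_mul (5 / 12)) |>.congr_deriv ?_
  simp only [Pi.div_apply]
  field_simp
  ring

lemma tendsto_upper_antideriv :
    Filter.Tendsto (fun x : ℝ => 25 / 4 * log ((1 + x) / (5 + 4 * x)) +
      5 / 12 * log ((5 + x) / (5 + 4 * x))) Filter.atTop
      (nhds (25 / 4 * log (1 / 4) + 5 / 12 * log (1 / 4))) := by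
  have key (a : ℝ) : Filter.Tendsto (fun x : ℝ => (a + x) / (5 + 4 * x)) Filter.atTop
      (nhds (1 / 4)) := by
    have h (b : ℝ) : Filter.Tendsto (fun x : ℝ => b * x⁻¹) Filter.atTop (nhds 0) := by
      simpa using tendsto_inv_atTop_zero.const_mul b
    have h1 : Filter.Tendsto (fun x : ℝ => (a * x⁻¹ + 1) / (5 * x⁻¹ + 4)) Filter.atTop
        (nhds ((0 + 1) / (0 + 4))) :=
      ((h a).add_const 1).div ((h 5).add_const 4) (by norm_num)
    rw [zero_add, zero_add] at h1
    refine h1.congr' ?_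
    filter_upwards [Filter.eventually_gt_atTop 0] with x hx
    field_simp
  exact (((key 1).log (by norm_num)).const_mul _).add (((key 5).log (by norm_num)).const_mul _)

lemma integrableOn_upper :
    IntegrableOn (fun x : ℝ => 25 / ((1 + x) * (5 + x) * (5 + 4 * x))) (Ioi 0) :=
  integrableOn_Ioi_deriv_of_nonneg' (fun _ hx => hasDerivAt_upper_antideriv hx)
    (fun x (hx : 0 < x) => by positivity) tendsto_upper_antideriv

lemma integral_upper_lt :
    ∫ x in Ioi (0 : ℝ), 25 / ((1 + x) * (5 + x) * (5 + 4 * x)) < 0.85 := by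
  rw [integral_Ioi_of_hasDerivAt_of_nonneg' (fun _ hx => hasDerivAt_upper_antideriv hx)
    (fun x (hx : 0 < x) => by positivity) tendsto_upper_antideriv]
  have h4 : log (1 / 4) = -(2 * log 2) := by
    rw [one_div, log_inv, show (4 : ℝ) = 2 ^ 2 by norm_num, log_pow]
    norm_num
  have h5 : log (1 / 5) = -(log (5 / 4) + 2 * log 2) := by
    rw [show (1 : ℝ) / 5 = (5 / 4)⁻¹ * (1 / 4) by norm_num,
      log_mul (by norm_num) (by norm_num), log_inv, h4]
    ring
  have := log_five_div_four_bounds.1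
  have := log_two_lt_d9
  norm_num only [add_zero, mul_zero, div_self, log_one]
  rw [h4, h5]
  norm_num
  linarith

lemma lt_integral_lower : 0.679 < ∫ x in (0 : ℝ)..3, 4 / ((1 + x) * (2 + x) ^ 2) := by
  have hd : ∀ x ∈ uIcc (0 : ℝ) 3, HasDerivAt
      (fun x => 4 * (log (1 + x) - log (2 + x) + 1 / (2 + x)))
      (4 / ((1 + x) * (2 + x) ^ 2)) x := by
    intro x hx
    rw [uIcc_of_le (by norm_num)] at hx
    have hx0 := hx.1
    have h1 : HasDerivAt (fun x : ℝ => 1 + x) 1 x := (hasDerivAt_id x).const_add 1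
    have h2 : HasDerivAt (fun x : ℝ => 2 + x) 1 x := (hasDerivAt_id x).const_add 2
    refine (((h1.log (by positivity)).sub (h2.log (by positivity))).add
      ((hasDerivAt_const x (1 : ℝ)).div h2 (by positivity))).const_mul 4 |>.congr_deriv ?_
    field_simp
    ring
  have hc : ContinuousOn (fun x : ℝ => 4 / ((1 + x) * (2 + x) ^ 2)) (uIcc 0 3) := by
    rw [uIcc_of_le (by norm_num)]
    refine ContinuousOn.div (by fun_prop) (by fun_prop) fun x hx => ?_
    have := hx.1
    positivity
  rw [intervalIntegral.integral_eq_sub_of_hasDerivAt hd hc.intervalIntegrable]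
  have h4 : log (1 + 3) = 2 * log 2 := by
    rw [show (1 + 3 : ℝ) = 2 ^ 2 by norm_num, log_pow]
    norm_num
  have h5 : log (2 + 3) = log (5 / 4) + 2 * log 2 := by
    rw [← h4, ← log_mul (by norm_num) (by norm_num)]
    norm_num
  have := log_five_div_four_bounds.1
  have := log_two_gt_d9
  rw [h4, h5, add_zero, add_zero, log_one]
  norm_num
  linarith

/-- The uplink average spectral efficiency in the interference-limited case with `η = 4`
and infinite `P_u`, `R = ∫₀^∞ exp(-√x arctan √x)/(x+1) dx`, is finite (the integrand is
integrable on `(0,∞)`) and satisfies `0.7 < R < 0.85` (numerically `R ≈ 0.77` nat/s/Hz). -/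
theorem spectral_efficiency_constant :
    IntegrableOn
        (fun x : ℝ => exp (-(Real.sqrt x * arctan (Real.sqrt x))) / (x + 1)) (Ioi 0) ∧
    0.7 < (∫ x in Ioi (0:ℝ), exp (-(Real.sqrt x * arctan (Real.sqrt x))) / (x + 1)) ∧
    (∫ x in Ioi (0:ℝ), exp (-(Real.sqrt x * arctan (Real.sqrt x))) / (x + 1)) < 0.85 := by
  have hle : ∀ x ∈ Ioi (0 : ℝ), exp (-(√x * arctan √x)) / (x + 1) ≤
      25 / ((1 + x) * (5 + x) * (5 + 4 * x)) :=
    fun x hx => exp_neg_sqrt_mul_arctan_div_le (le_of_lt hx)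
  have hnn : ∀ x ∈ Ioi (0 : ℝ), 0 ≤ exp (-(√x * arctan √x)) / (x + 1) := by
    intro x (hx : 0 < x)
    positivity
  have hint : IntegrableOn (fun x : ℝ => exp (-(√x * arctan √x)) / (x + 1)) (Ioi 0) := by
    refine Integrable.mono' integrableOn_upper
      ((continuousOn_exp_neg_sqrt_mul_arctan_div.mono
        Ioi_subset_Ici_self).aestronglyMeasurable measurableSet_Ioi) ?_
    filter_upwards [ae_restrict_mem measurableSet_Ioi] with x hx
    rw [norm_of_nonneg (hnn x hx)]
    exact hle x hx
  refine ⟨hint, ?_, ?_⟩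
  · have hsub : ∫ x in (0 : ℝ)..4, exp (-(√x * arctan √x)) / (x + 1) ≤
        ∫ x in Ioi (0 : ℝ), exp (-(√x * arctan √x)) / (x + 1) := by
      rw [intervalIntegral.integral_of_le (by norm_num)]
      refine setIntegral_mono_set hint ?_ Ioc_subset_Ioi_self.eventuallyLE
      filter_upwards [ae_restrict_mem measurableSet_Ioi] with x hx using hnn x hx
    have hii {a b : ℝ} (ha : 0 ≤ a) (hb : 0 ≤ b) : IntervalIntegrable
        (fun x : ℝ => exp (-(√x * arctan √x)) / (x + 1)) volume a b :=
      (continuousOn_exp_neg_sqrt_mul_arctan_div.mono fun x hx =>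
        (le_inf ha hb).trans hx.1).intervalIntegrable
    have hadd := intervalIntegral.integral_add_adjacent_intervals
      (hii (a := 0) (b := 3) le_rfl (by norm_num))
      (hii (a := 3) (b := 4) (by norm_num) (by norm_num))
    have hlow : ∫ x in (0 : ℝ)..3, 4 / ((1 + x) * (2 + x) ^ 2) ≤
        ∫ x in (0 : ℝ)..3, exp (-(√x * arctan √x)) / (x + 1) := by
      refine intervalIntegral.integral_mono_on (by norm_num) ?_ (hii le_rfl (by norm_num))
        fun x hx => le_exp_neg_sqrt_mul_arctan_div hx.1 hx.2
      refine ContinuousOn.intervalIntegrable ?_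
      rw [uIcc_of_le (by norm_num)]
      refine ContinuousOn.div (by fun_prop) (by fun_prop) fun x hx => ?_
      have := hx.1
      positivity
    have htail : ∫ _ in (3 : ℝ)..4, (2 / 95 : ℝ) ≤
        ∫ x in (3 : ℝ)..4, exp (-(√x * arctan √x)) / (x + 1) :=
      intervalIntegral.integral_mono_on (by norm_num) (by simp)
        (hii (by norm_num) (by norm_num))
        fun x hx => const_le_exp_neg_sqrt_mul_arctan_div (by linarith [hx.1]) hx.2
    rw [intervalIntegral.integral_const] at htail
    have := lt_integral_lower
    norm_num at htail this ⊢
    linarith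
  · exact (setIntegral_mono_on hint integrableOn_upper measurableSet_Ioi hle).trans_lt
      integral_upper_lt
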